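/- Per-sample Gaussian mutual information bound: Fix a size-K set S ⊆ {1,…,N}, a proper subset S̃ ⊊ S, and write S' = S ∖ S̃. Let β_S have i.i.d. uniform ±1 entries, W ~ N(0, 1/SNR), and Y = ∑_{k∈S} X_k β_k + W, where X_S = (X_k)_{k∈S} is jointly Gaussian with mean zero and covariance matrix Σ whose diagonal entries equal N·P_t/K and whose off-diagonal entries all equal ρ, independent of (β_S, W), and Σ is positive semidefinite. Then I(X_{S'} ; Y | X_{S̃}, β_S) ≤ (1/2)·E[ln(1 + SNR·β_{S'}^T Σ_{S'} β_{S'})] ≤ (1/2)·ln(1 + SNR·(K − |S̃|)·N·P_t/K), where Σ_{S'} is the principal submatrix of Σ indexed by S'. In particular the bound does not depend on ρ. -/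

import Mathlib

/-!
Write `T = S \ St`, `Z = (X_St, β)`, and let `g` be the density of the noise `W`. If
`I(X_T; Z) = ⊤`, the conditional mutual information is `a - ⊤ = ⊥` in `EReal` and there is nothing
to prove. Otherwise the law of `(X_T, (Y, Z))` has density `h · g(y - f(x, z))` with respect to
`P_X ⊗ Lebesgue ⊗ P_Z`, with `h` the density of the law of `(X_T, Z)`, and the law of `(Y, Z)` has a
density `q` with respect to `Lebesgue ⊗ P_Z`. The `log h` terms cancel in
`I(X_T; (Y, Z)) - I(X_T; Z)`, which leaves `E[log g(W)] - E[log q(Y, Z)]`, the differential entropy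
of `Y` given `Z` minus that of `W`.

The Gaussian maximum-entropy bound is Gibbs' inequality (`gibbs`): `q` may be replaced by any
conditional density `r`, here the Gaussian one with mean `∑_{k ∈ St} x_k b_k` and variance
`V(b) = Q(b) + 1 / SNR`, where `Q(b) = ∑_{k, l ∈ T} b_k Cov_{kl} b_l`. Integrability of `log q` is
automatic, because `q` is at most the supremum of `g`. These steps form `condMutInfo_le_of_channel`,
which holds for any additive noise with a bounded positive density and finite entropy.

Given `β = b`, the variable `Y - ∑_{k ∈ St} x_k b_k = ∑_{k ∈ T} X_k b_k + W` has second moment `V(b)`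
(`second_moment`), so the quadratic terms of the two log-densities both integrate to `1 / 2` and the
bound becomes `1 / 2 * E[log (V(β) / (1 / SNR))]`. The second inequality is Jensen's inequality for
`log`, together with `E[Q(β)] = ∑_{k ∈ T} Cov_{kk}` (`integral_betaLaw_quadForm`).
-/

open MeasureTheory ProbabilityTheory
open scoped ENNReal NNReal

open scoped Classical

/-- Kullback–Leibler divergence between two measures (in `EReal`, with value `⊤` when the
divergence is not well defined as an integral). -/
noncomputable def klDiv {α : Type*} [MeasurableSpace α] (μ ν : Measure α) : EReal :=
  if μ ≪ ν ∧ Integrable (fun x => Real.log (μ.rnDeriv ν x).toReal) μ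
  then ((∫ x, Real.log (μ.rnDeriv ν x).toReal ∂μ : ℝ) : EReal)
  else ⊤

/-- Mutual information `I(X ; Y)` of two random variables, defined as the KL divergence
between the joint law and the product of the marginal laws. -/
noncomputable def mutInfo {Ω α β : Type*} [MeasurableSpace Ω]
    [MeasurableSpace α] [MeasurableSpace β]
    (μ : Measure Ω) (X : Ω → α) (Y : Ω → β) : EReal :=
  klDiv (μ.map fun a => (X a, Y a)) ((μ.map X).prod (μ.map Y))

/-- Conditional mutual information `I(X ; Y | Z) = I(X ; (Y, Z)) − I(X ; Z)`. -/
noncomputable def condMutInfo {Ω α β γ : Type*} [MeasurableSpace Ω]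
    [MeasurableSpace α] [MeasurableSpace β] [MeasurableSpace γ]
    (μ : Measure Ω) (X : Ω → α) (Y : Ω → β) (Z : Ω → γ) : EReal :=
  mutInfo μ X (fun a => (Y a, Z a)) - mutInfo μ X Z

/-- A `±1` sign vector on `S` (zero off `S`). -/
noncomputable def signVec {N : ℕ} (S : Finset (Fin N)) (ε : {n // n ∈ S} → Bool) :
    Fin N → ℝ :=
  fun n => if h : n ∈ S then (if ε ⟨n, h⟩ then 1 else -1) else 0

/-- The law of the support coefficients `β_S`: i.i.d. uniform `±1` entries on `S`,
zero off `S`. -/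
noncomputable def betaLaw {N : ℕ} (S : Finset (Fin N)) : Measure (Fin N → ℝ) :=
  ((2 : ℝ≥0∞) ^ S.card)⁻¹ • ∑ ε : {n // n ∈ S} → Bool, Measure.dirac (signVec S ε)

/-- The joint law of `(X, β_S, W)` when `X ∼ ν` is independent of `(β_S, W)`,
`β_S ∼ betaLaw S` and `W ∼ N(0, 1/SNR)`. -/
noncomputable def jointLaw {N : ℕ} (S : Finset (Fin N)) (SNR : ℝ)
    (ν : Measure (Fin N → ℝ)) : Measure ((Fin N → ℝ) × ((Fin N → ℝ) × ℝ)) :=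
  ν.prod ((betaLaw S).prod (gaussianReal 0 (Real.toNNReal (1 / SNR))))

/-- The observation `Y = ∑_{k ∈ S} X_k β_k + W` on the canonical space. -/
noncomputable def Yout {N : ℕ} (S : Finset (Fin N))
    (p : (Fin N → ℝ) × ((Fin N → ℝ) × ℝ)) : ℝ :=
  (∑ k ∈ S, p.1 k * p.2.1 k) + p.2.2

/-- The objective `min_{S̃ ⊊ S} I(X_{S∖S̃} ; Y | X_S̃, β_S)` for input law `ν`. -/
noncomputable def minCondMI {N : ℕ} (S : Finset (Fin N)) (SNR : ℝ)
    (ν : Measure (Fin N → ℝ)) : EReal :=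
  ⨅ (St : Finset (Fin N)) (_ : St ⊂ S),
    condMutInfo (jointLaw S SNR ν)
      (fun p => fun n => if n ∈ S \ St then p.1 n else 0)
      (Yout S)
      (fun p => ((fun n => if n ∈ St then p.1 n else 0), p.2.1))

/-! ### Gibbs' inequality -/

/-- **Gibbs' inequality** in the form `h(P) ≤` cross-entropy: a probability measure `P` with bounded
density with respect to `κ`, compared with a positive sub-probability density `r`. The integrability
of the log-density of `P` is part of the conclusion: it lies between `log r - r / q + 1` and the
logarithm of the bound. -/
lemma gibbs {T : Type*} [MeasurableSpace T] (P κ : Measure T) [IsProbabilityMeasure P]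
    [SigmaFinite κ] (C : ℝ≥0) (hPκ : P ≤ (C : ℝ≥0∞) • κ) (r : T → ℝ) (hr : Measurable r)
    (hr0 : ∀ t, 0 < r t) (hr1 : ∫⁻ t, ENNReal.ofReal (r t) ∂κ ≤ 1)
    (hlog : Integrable (fun t => Real.log (r t)) P) :
    Integrable (fun t => Real.log (P.rnDeriv κ t).toReal) P ∧
      ∫ t, Real.log (r t) ∂P ≤ ∫ t, Real.log (P.rnDeriv κ t).toReal ∂P := by
  have hac : P ≪ κ := (Measure.absolutelyContinuous_of_le hPκ).trans
    (Measure.smul_absolutelyContinuous)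
  set q := P.rnDeriv κ with hq
  have hqm : Measurable q := Measure.measurable_rnDeriv _ _
  have hqC : ∀ᵐ t ∂κ, q t ≤ C := by
    refine ae_le_of_forall_setLIntegral_le_of_sigmaFinite hqm fun s hs _ => ?_
    rw [Measure.setLIntegral_rnDeriv hac, setLIntegral_const]
    exact hPκ s
  have hqpos : ∀ᵐ t ∂P, 0 < q t := Measure.rnDeriv_pos hac
  have hqtop : ∀ᵐ t ∂P, q t < ∞ := hac.ae_le (Measure.rnDeriv_lt_top P κ)
  have hum : Measurable fun t => r t / (q t).toReal := hr.div hqm.ennreal_toReal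
  have hu0 : ∀ t, 0 ≤ r t / (q t).toReal := fun t => div_nonneg (hr0 t).le ENNReal.toReal_nonneg
  have hu1 : ∫⁻ t, ENNReal.ofReal (r t / (q t).toReal) ∂P ≤ 1 := by
    rw [← lintegral_rnDeriv_mul hac (by fun_prop)]
    refine le_trans (lintegral_mono fun t => ?_) hr1
    change q t * _ ≤ _
    rcases eq_or_ne (q t) 0 with h0 | h0
    · simp [h0]
    rcases eq_or_ne (q t) ∞ with h1 | h1
    · simp [h1]
    · have h2 : 0 < (q t).toReal := ENNReal.toReal_pos h0 h1
      conv_lhs => rw [← ENNReal.ofReal_toReal h1]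
      rw [← ENNReal.ofReal_mul h2.le, ENNReal.toReal_ofReal h2.le, mul_div_cancel₀ _ h2.ne']
  have hui : Integrable (fun t => r t / (q t).toReal) P := by
    refine ⟨hum.aestronglyMeasurable, ?_⟩
    rw [hasFiniteIntegral_iff_ofReal (ae_of_all _ hu0)]
    exact hu1.trans_lt ENNReal.one_lt_top
  have hui1 : ∫ t, r t / (q t).toReal ∂P ≤ 1 := by
    rw [integral_eq_lintegral_of_nonneg_ae (ae_of_all _ hu0) hum.aestronglyMeasurable]
    exact ENNReal.toReal_le_of_le_ofReal zero_le_one (by simpa using hu1)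
  have hlow : ∀ᵐ t ∂P, Real.log (r t) - r t / (q t).toReal + 1 ≤ Real.log (q t).toReal := by
    filter_upwards [hqpos, hqtop] with t h0 h1
    have h2 : 0 < (q t).toReal := ENNReal.toReal_pos h0.ne' h1.ne
    have := Real.log_le_sub_one_of_pos (div_pos (hr0 t) h2)
    rw [Real.log_div (hr0 t).ne' h2.ne'] at this
    linarith
  have hup : ∀ᵐ t ∂P, Real.log (q t).toReal ≤ Real.log C := by
    filter_upwards [hqpos, hqtop, hac.ae_le hqC] with t h0 h1 h3
    have h2 : 0 < (q t).toReal := ENNReal.toReal_pos h0.ne' h1.ne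
    refine Real.log_le_log h2 ?_
    simpa using ENNReal.toReal_mono ENNReal.coe_ne_top h3
  have hli : Integrable (fun t => Real.log (r t) - r t / (q t).toReal + 1) P :=
    (hlog.sub hui).add (integrable_const _)
  have hint : Integrable (fun t => Real.log (q t).toReal) P :=
    integrable_of_le_of_le hqm.ennreal_toReal.log.aestronglyMeasurable hlow hup hli (integrable_const _)
  refine ⟨hint, ?_⟩
  have h := integral_mono_ae hli hint hlow
  have h2 : ∫ t, (Real.log (r t) - r t / (q t).toReal + 1) ∂P =
      ∫ t, Real.log (r t) ∂P - ∫ t, r t / (q t).toReal ∂P + 1 := by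
    rw [← integral_sub hlog hui, integral_add (f := fun t => Real.log (r t) - r t / (q t).toReal)
      (hlog.sub hui) (integrable_const _)]
    simp
  linarith

/-! ### Additive-noise channels -/

/-- Tonelli with translation invariance in the noise variable: the joint law of `(X, (Y, Z))` has
conditional density `y ↦ g (y - f (x, z))` given `(X, Z) = (x, z)`. -/
lemma lintegral_channel {Ω α γ : Type*} [MeasurableSpace Ω] [MeasurableSpace α]
    [MeasurableSpace γ] (P : Measure Ω) [IsProbabilityMeasure P]
    (X : Ω → α) (Y : Ω → ℝ) (Z : Ω → γ) (W : Ω → ℝ)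
    (hX : Measurable X) (hZ : Measurable Z) (hW : Measurable W)
    (f : α × γ → ℝ) (hf : Measurable f) (hY : ∀ ω, Y ω = f (X ω, Z ω) + W ω)
    (g : ℝ → ℝ) (hg : Measurable g)
    (hlaw : P.map (fun ω => ((X ω, Z ω), W ω)) =
      (P.map fun ω => (X ω, Z ω)).prod (volume.withDensity fun w => ENNReal.ofReal (g w)))
    (φ : α × (ℝ × γ) → ℝ≥0∞) (hφ : Measurable φ) :
    ∫⁻ ω, φ (X ω, (Y ω, Z ω)) ∂P =
      ∫⁻ xz, (∫⁻ y : ℝ, φ (xz.1, (y, xz.2)) * ENNReal.ofReal (g (y - f xz)))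
        ∂(P.map fun ω => (X ω, Z ω)) := by
  have h1 : ∫⁻ ω, φ (X ω, (Y ω, Z ω)) ∂P =
      ∫⁻ p, φ (p.1.1, (f p.1 + p.2, p.1.2)) ∂(P.map (fun ω => ((X ω, Z ω), W ω))) := by
    rw [lintegral_map (by fun_prop) (by fun_prop)]
    simp only [hY]
  rw [h1, hlaw, lintegral_prod _ (by fun_prop)]
  refine lintegral_congr fun xz => ?_
  rw [lintegral_withDensity_eq_lintegral_mul _ (by fun_prop) (by fun_prop),
    ← lintegral_sub_right_eq_self _ (f xz)]
  refine lintegral_congr fun y => ?_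
  simp [mul_comm]

/-- Log-likelihood ratio of two measures with densities `a` and `q` with respect to the same `κ`,
the first being absolutely continuous with respect to the second (`q > 0` almost surely). -/
lemma rnDeriv_of_densities {E : Type*} [MeasurableSpace E] (J M κ : Measure E)
    [IsFiniteMeasure J] [IsFiniteMeasure M] (a q : E → ℝ≥0∞)
    (ha : Measurable a) (hq : Measurable q) (hJ : J = κ.withDensity a) (hM : M = κ.withDensity q)
    (hq0 : ∀ᵐ e ∂J, q e ≠ 0) (hqt : ∀ᵐ e ∂κ, q e ≠ ∞) :
    J ≪ M ∧ J.rnDeriv M =ᵐ[J] fun e => a e / q e := by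
  have hz : ∀ᵐ e ∂κ, a e ≠ 0 → q e ≠ 0 := by
    rw [hJ] at hq0
    exact (ae_withDensity_iff ha).1 hq0
  have hJM : J = M.withDensity fun e => a e / q e := by
    rw [hM, hJ]
    refine Eq.trans ?_ (withDensity_mul κ hq (ha.div hq))
    refine withDensity_congr_ae ?_
    filter_upwards [hz, hqt] with e h1 h2
    simp only [Pi.mul_apply]
    by_cases h : a e = 0
    · simp [h]
    · exact (ENNReal.mul_div_cancel (h1 h) h2).symm
  have hac : J ≪ M := hJM ▸ withDensity_absolutelyContinuous _ _
  refine ⟨hac, hac.ae_le ?_⟩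
  have h := Measure.rnDeriv_withDensity M (ha.div hq)
  rwa [show M.withDensity (a / q) = J from hJM.symm] at h

/-- Bound on the conditional mutual information across an additive-noise channel `Y = f (X, Z) + W`,
where `W` has a bounded density `g` and is independent of `(X, Z)`: replacing the
true conditional density of `Y` given `Z` by any conditional sub-density `r` only increases
the value `E[log g(W)] - E[log q(Y | Z)]`. If `I(X; Z) = ⊤`, the left side is `⊥`, since
`a - ⊤ = ⊥` in `EReal`. -/
lemma condMutInfo_le_of_channel {Ω α γ : Type*} [MeasurableSpace Ω] [MeasurableSpace α]
    [MeasurableSpace γ] (P : Measure Ω) [IsProbabilityMeasure P]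
    (X : Ω → α) (Y : Ω → ℝ) (Z : Ω → γ) (W : Ω → ℝ)
    (hX : Measurable X) (hZ : Measurable Z) (hW : Measurable W)
    (f : α × γ → ℝ) (hf : Measurable f) (hY : ∀ ω, Y ω = f (X ω, Z ω) + W ω)
    (g : ℝ → ℝ) (hg : Measurable g) (hg0 : ∀ w, 0 < g w) (C : ℝ≥0) (hgC : ∀ w, g w ≤ C)
    (hlaw : P.map (fun ω => ((X ω, Z ω), W ω)) =
      (P.map fun ω => (X ω, Z ω)).prod (volume.withDensity fun w => ENNReal.ofReal (g w)))
    (r : ℝ × γ → ℝ) (hr : Measurable r) (hr0 : ∀ t, 0 < r t)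
    (hr1 : ∀ z, ∫⁻ y, ENNReal.ofReal (r (y, z)) ≤ 1)
    (hgi : Integrable (fun ω => Real.log (g (W ω))) P)
    (hri : Integrable (fun ω => Real.log (r (Y ω, Z ω))) P) :
    condMutInfo P X Y Z ≤
      ((∫ ω, Real.log (g (W ω)) ∂P - ∫ ω, Real.log (r (Y ω, Z ω)) ∂P : ℝ) : EReal) := by
  have hYm : Measurable Y := by
    rw [show Y = fun ω => f (X ω, Z ω) + W ω from funext hY]
    fun_prop
  have hch := lintegral_channel P X Y Z W hX hZ hW f hf hY g hg hlaw
  unfold condMutInfo mutInfo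
  set A := P.map fun ω => (X ω, Z ω) with hA
  set PX := P.map X with hPX
  set PZ := P.map Z with hPZ
  set T : Ω → ℝ × γ := fun ω => (Y ω, Z ω) with hT
  have hTm : Measurable T := by fun_prop
  set J := P.map fun ω => (X ω, T ω) with hJ
  set κ : Measure (ℝ × γ) := (volume : Measure ℝ).prod PZ with hκ
  have : IsProbabilityMeasure A := Measure.isProbabilityMeasure_map (by fun_prop)
  have : IsProbabilityMeasure PX := Measure.isProbabilityMeasure_map (by fun_prop)
  have : IsProbabilityMeasure PZ := Measure.isProbabilityMeasure_map (by fun_prop)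
  have : IsProbabilityMeasure J := Measure.isProbabilityMeasure_map (by fun_prop)
  have : IsProbabilityMeasure (P.map T) := Measure.isProbabilityMeasure_map (by fun_prop)
  by_cases hcase : A ≪ PX.prod PZ ∧
      Integrable (fun x => Real.log (A.rnDeriv (PX.prod PZ) x).toReal) A
  swap
  · rw [show klDiv A (PX.prod PZ) = ⊤ from if_neg hcase, EReal.sub_top]
    exact bot_le
  obtain ⟨hAB, hAi⟩ := hcase
  set h := A.rnDeriv (PX.prod PZ) with hh
  have hhm : Measurable h := Measure.measurable_rnDeriv _ _
  -- the law of `(Y, Z)` has density at most `C`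
  have hPT : P.map T ≤ (C : ℝ≥0∞) • κ := by
    refine Measure.le_iff.2 fun s hs => ?_
    have hsm : Measurable (s.indicator (1 : ℝ × γ → ℝ≥0∞)) := measurable_one.indicator hs
    calc P.map T s = ∫⁻ ω, s.indicator 1 (Y ω, Z ω) ∂P := by
          rw [← lintegral_indicator_one hs, lintegral_map hsm hTm]
      _ = ∫⁻ xz, (∫⁻ y : ℝ, s.indicator 1 (y, xz.2) * ENNReal.ofReal (g (y - f xz))) ∂A :=
          hch (fun p => s.indicator 1 p.2) (hsm.comp measurable_snd)
      _ ≤ ∫⁻ xz, (∫⁻ y : ℝ, s.indicator 1 (y, xz.2) * C) ∂A := by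
          gcongr with xz y
          simpa using ENNReal.ofReal_le_ofReal (hgC (y - f xz))
      _ = ∫⁻ z, (∫⁻ y : ℝ, s.indicator 1 (y, z) * C) ∂PZ := by
          rw [hA, lintegral_map (f := fun xz : α × γ =>
            ∫⁻ y : ℝ, s.indicator 1 (y, xz.2) * (C : ℝ≥0∞)) (by fun_prop) (by fun_prop), hPZ,
            lintegral_map (f := fun z : γ =>
            ∫⁻ y : ℝ, s.indicator 1 (y, z) * (C : ℝ≥0∞)) (by fun_prop) (by fun_prop)]
      _ = ((C : ℝ≥0∞) • κ) s := by
          rw [← lintegral_prod_symm (μ := (volume : Measure ℝ)) (ν := PZ)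
            (fun p => s.indicator 1 p * (C : ℝ≥0∞)) (by fun_prop),
            lintegral_mul_const _ hsm, lintegral_indicator_one hs, mul_comm]
          rfl
  have hacT : P.map T ≪ κ := (Measure.absolutelyContinuous_of_le hPT).trans
    (Measure.smul_absolutelyContinuous)
  -- Gibbs' inequality against `r`
  have hrκ : ∫⁻ t, ENNReal.ofReal (r t) ∂κ ≤ 1 := by
    rw [hκ, lintegral_prod_symm _ (by fun_prop)]
    calc ∫⁻ z, (∫⁻ y : ℝ, ENNReal.ofReal (r (y, z))) ∂PZ ≤ ∫⁻ _, 1 ∂PZ := lintegral_mono hr1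
      _ = 1 := by simp
  have hriT : Integrable (fun t => Real.log (r t)) (P.map T) :=
    (integrable_map_measure hr.log.aestronglyMeasurable hTm.aemeasurable).2 hri
  obtain ⟨hqi, hqle⟩ := gibbs (P.map T) κ C hPT r hr hr0 hrκ hriT
  rw [integral_map hTm.aemeasurable hr.log.aestronglyMeasurable] at hqle
  set q := (P.map T).rnDeriv κ with hq
  have hqm : Measurable q := Measure.measurable_rnDeriv _ _
  set a : α × (ℝ × γ) → ℝ≥0∞ :=
    fun p => h (p.1, p.2.2) * ENNReal.ofReal (g (p.2.1 - f (p.1, p.2.2))) with ha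
  have ham : Measurable a := by fun_prop
  have hJa : J = (PX.prod κ).withDensity a := by
    refine Measure.ext_of_lintegral _ fun φ hφ => ?_
    rw [hJ, lintegral_map hφ (by fun_prop)]
    refine (hch φ hφ).trans ?_
    rw [← lintegral_rnDeriv_mul hAB (by fun_prop), lintegral_prod _ (by fun_prop),
      lintegral_withDensity_eq_lintegral_mul _ ham hφ, lintegral_prod _ (by fun_prop)]
    refine lintegral_congr fun x => ?_
    rw [hκ, lintegral_prod_symm _ (by fun_prop)]
    refine lintegral_congr fun z => ?_
    rw [← lintegral_const_mul _ (by fun_prop)]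
    refine lintegral_congr fun y => ?_
    simp only [ha, Pi.mul_apply, ← hh]
    ring
  have hM : PX.prod (P.map T) = (PX.prod κ).withDensity fun p => q p.2 := by
    rw [← prod_withDensity_right hqm, hq, Measure.withDensity_rnDeriv_eq _ _ hacT]
  -- transfer of almost sure statements and integrals to the marginals of `J`
  have hJT : J.map Prod.snd = P.map T := by
    rw [hJ, Measure.map_map measurable_snd (by fun_prop)]; rfl
  have hJA : J.map (fun p => (p.1, p.2.2)) = A := by
    rw [hJ, Measure.map_map (by fun_prop) (by fun_prop)]; rfl
  have hq0 : ∀ᵐ p ∂J, q p.2 ≠ 0 := by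
    have : ∀ᵐ t ∂(J.map Prod.snd), 0 < q t := by
      rw [hJT]
      exact Measure.rnDeriv_pos hacT
    filter_upwards [ae_of_ae_map (by fun_prop) this] with p hp using hp.ne'
  have hqt : ∀ᵐ p ∂(PX.prod κ), q p.2 ≠ ∞ :=
    Measure.quasiMeasurePreserving_snd.ae (Measure.rnDeriv_ne_top (P.map T) κ)
  have hh0 : ∀ᵐ p ∂J, h (p.1, p.2.2) ≠ 0 ∧ h (p.1, p.2.2) ≠ ∞ := by
    have h1 : ∀ᵐ p ∂(J.map fun p => (p.1, p.2.2)), 0 < h p := by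
      rw [hJA]
      exact Measure.rnDeriv_pos hAB
    have h2 : ∀ᵐ p ∂(J.map fun p => (p.1, p.2.2)), h p ≠ ∞ := by
      rw [hJA]
      exact hAB.ae_le (Measure.rnDeriv_ne_top A (PX.prod PZ))
    filter_upwards [ae_of_ae_map (by fun_prop) h1, ae_of_ae_map (by fun_prop) h2] with p hp hp2
    exact ⟨hp.ne', hp2⟩
  obtain ⟨hJM, hJr⟩ := rnDeriv_of_densities J (PX.prod (P.map T)) (PX.prod κ) a (fun p => q p.2)
    ham (by fun_prop) hJa hM hq0 hqt
  have hJac : J ≪ PX.prod κ := hJa ▸ withDensity_absolutelyContinuous _ _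
  have hlogeq : (fun p => Real.log (J.rnDeriv (PX.prod (P.map T)) p).toReal) =ᵐ[J]
      fun p => Real.log (h (p.1, p.2.2)).toReal + Real.log (g (p.2.1 - f (p.1, p.2.2)))
        - Real.log (q p.2).toReal := by
    filter_upwards [hJr, hq0, hJac.ae_le hqt, hh0] with p h1 h2 h3 h4
    rw [h1]
    have hgp := hg0 (p.2.1 - f (p.1, p.2.2))
    simp only [ha, ENNReal.toReal_div, ENNReal.toReal_mul, ENNReal.toReal_ofReal hgp.le]
    rw [Real.log_div (mul_ne_zero (ENNReal.toReal_ne_zero.2 h4) hgp.ne')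
      (ENNReal.toReal_ne_zero.2 ⟨h2, h3⟩), Real.log_mul (ENNReal.toReal_ne_zero.2 h4) hgp.ne']
  have i1 : Integrable (fun p : α × (ℝ × γ) => Real.log (h (p.1, p.2.2)).toReal) J := by
    rw [← hJA] at hAi
    exact (integrable_map_measure hhm.ennreal_toReal.log.aestronglyMeasurable (by fun_prop)).1 hAi
  have e1 : ∫ p : α × (ℝ × γ), Real.log (h (p.1, p.2.2)).toReal ∂J =
      ∫ p, Real.log (h p).toReal ∂A := by
    rw [← hJA, integral_map (by fun_prop) hhm.ennreal_toReal.log.aestronglyMeasurable]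
  have i3 : Integrable (fun p : α × (ℝ × γ) => Real.log (q p.2).toReal) J := by
    rw [← hJT] at hqi
    exact (integrable_map_measure hqm.ennreal_toReal.log.aestronglyMeasurable (by fun_prop)).1 hqi
  have e3 : ∫ p : α × (ℝ × γ), Real.log (q p.2).toReal ∂J =
      ∫ p, Real.log (q p).toReal ∂(P.map T) := by
    rw [← hJT, integral_map (by fun_prop) hqm.ennreal_toReal.log.aestronglyMeasurable]
  have hgm : Measurable fun p : α × (ℝ × γ) => Real.log (g (p.2.1 - f (p.1, p.2.2))) :=
    Measurable.log (by fun_prop)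
  have hWeq : ∀ ω, Y ω - f (X ω, Z ω) = W ω := fun ω => by rw [hY]; ring
  have i2 : Integrable (fun p : α × (ℝ × γ) => Real.log (g (p.2.1 - f (p.1, p.2.2)))) J := by
    rw [hJ, integrable_map_measure hgm.aestronglyMeasurable (by fun_prop)]
    simpa only [Function.comp_def, hT, hWeq] using hgi
  have e2 : ∫ p : α × (ℝ × γ), Real.log (g (p.2.1 - f (p.1, p.2.2))) ∂J =
      ∫ ω, Real.log (g (W ω)) ∂P := by
    rw [hJ, integral_map (by fun_prop) hgm.aestronglyMeasurable]
    simp only [hT, hWeq]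
  have hJi : Integrable (fun p => Real.log (J.rnDeriv (PX.prod (P.map T)) p).toReal) J :=
    ((i1.add i2).sub i3).congr hlogeq.symm
  have hval : ∫ p, Real.log (J.rnDeriv (PX.prod (P.map T)) p).toReal ∂J =
      ∫ p, Real.log (h p).toReal ∂A + ∫ ω, Real.log (g (W ω)) ∂P
        - ∫ p, Real.log (q p).toReal ∂(P.map T) := by
    rw [integral_congr_ae hlogeq, ← e1, ← e2, ← e3, ← integral_add i1 i2]
    exact integral_sub (i1.add i2) i3
  rw [show klDiv J (PX.prod (P.map T)) = _ from if_pos ⟨hJM, hJi⟩,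
    show klDiv A (PX.prod PZ) = _ from if_pos ⟨hAB, hAi⟩, ← EReal.coe_sub, EReal.coe_le_coe_iff,
    hval]
  linarith

lemma map_pair_noise {E B δ : Type*} [MeasurableSpace E] [MeasurableSpace B] [MeasurableSpace δ]
    (ν : Measure E) (β : Measure B) (G : Measure ℝ) [IsProbabilityMeasure ν]
    [IsProbabilityMeasure β] [IsProbabilityMeasure G] (H : E × B → δ) (hH : Measurable H) :
    (ν.prod (β.prod G)).map (fun p => (H (p.1, p.2.1), p.2.2)) =
      ((ν.prod (β.prod G)).map fun p => H (p.1, p.2.1)).prod G := by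
  have h1 : (ν.prod (β.prod G)).map (fun p => (H (p.1, p.2.1), p.2.2)) =
      ((ν.prod β).map H).prod G := by
    rw [← Measure.prodAssoc_prod, Measure.map_map (by fun_prop) MeasurableEquiv.prodAssoc.measurable]
    conv_rhs => rw [← Measure.map_id (μ := G)]
    rw [Measure.map_prod_map _ _ hH measurable_id]
    rfl
  have h2 : (ν.prod (β.prod G)).map (fun p => H (p.1, p.2.1)) = (ν.prod β).map H := by
    have := congrArg (Measure.map Prod.fst) h1
    rw [Measure.map_map measurable_fst (by fun_prop), Measure.map_fst_prod] at this
    simpa [Function.comp_def] using this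
  rw [h1, h2]

/-! ### Sign coefficients -/

lemma integrable_betaLaw {N : ℕ} (S : Finset (Fin N)) (F : (Fin N → ℝ) → ℝ) :
    Integrable F (betaLaw S) := by
  unfold betaLaw
  refine Integrable.smul_measure ?_ (by simp)
  exact integrable_finsetSum_measure.2 fun ε _ => integrable_dirac (by simp)

lemma integral_betaLaw {N : ℕ} (S : Finset (Fin N)) (F : (Fin N → ℝ) → ℝ) :
    ∫ b, F b ∂(betaLaw S) = ((2 : ℝ) ^ S.card)⁻¹ * ∑ ε : {n // n ∈ S} → Bool, F (signVec S ε) := by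
  unfold betaLaw
  rw [integral_smul_measure, integral_finsetSum_measure fun ε _ => integrable_dirac (by simp)]
  simp

lemma isProbabilityMeasure_betaLaw {N : ℕ} (S : Finset (Fin N)) :
    IsProbabilityMeasure (betaLaw S) := by
  constructor
  simp only [betaLaw, Measure.smul_apply, Measure.coe_finsetSum, Finset.sum_apply, measure_univ,
    Finset.sum_const, Finset.card_univ, Fintype.card_fun, Fintype.card_bool, Fintype.card_coe,
    smul_eq_mul, nsmul_eq_mul, mul_one, Nat.cast_pow, Nat.cast_ofNat]
  exact ENNReal.inv_mul_cancel (by simp) (by simp)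

lemma abs_signVec_le {N : ℕ} (S : Finset (Fin N)) (ε : {n // n ∈ S} → Bool) (k : Fin N) :
    |signVec S ε k| ≤ 1 := by
  unfold signVec
  split_ifs <;> simp

lemma ae_betaLaw_abs_le {N : ℕ} (S : Finset (Fin N)) (k : Fin N) :
    ∀ᵐ b ∂(betaLaw S), |b k| ≤ 1 := by
  rw [ae_iff, betaLaw, Measure.smul_apply, Measure.finsetSum_apply]
  simp [abs_signVec_le]

/-- Distinct coefficients are uncorrelated, by the symmetry flipping the sign of the `k`-th one. -/
lemma integral_betaLaw_mul {N : ℕ} (S : Finset (Fin N)) (k l : Fin N) (hk : k ∈ S) (hl : l ∈ S) :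
    ∫ b, b k * b l ∂(betaLaw S) = if k = l then 1 else 0 := by
  rw [integral_betaLaw]
  split_ifs with hkl
  · subst hkl
    have : ∀ ε, signVec S ε k * signVec S ε k = 1 := fun ε => by
      simp only [signVec, hk, dif_pos]
      split_ifs <;> norm_num
    simp [this]
  · let e : ({n // n ∈ S} → Bool) ≃ ({n // n ∈ S} → Bool) :=
      Function.Involutive.toPerm (fun ε => Function.update ε ⟨k, hk⟩ (!ε ⟨k, hk⟩))
        (fun ε => by simp)
    have he : ∀ ε, e ε = Function.update ε ⟨k, hk⟩ (!ε ⟨k, hk⟩) := fun ε => rfl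
    have h : ∑ ε, signVec S ε k * signVec S ε l = ∑ ε, -(signVec S ε k * signVec S ε l) := by
      rw [← Equiv.sum_comp e]
      refine Finset.sum_congr rfl fun ε _ => ?_
      have hlk : (⟨l, hl⟩ : {n // n ∈ S}) ≠ ⟨k, hk⟩ := fun h => hkl (congrArg Subtype.val h).symm
      have h1 : e ε ⟨k, hk⟩ = !ε ⟨k, hk⟩ := by simp [he]
      have h2 : e ε ⟨l, hl⟩ = ε ⟨l, hl⟩ := by
        rw [he, Function.update_of_ne hlk]
      simp only [signVec, hk, hl, dif_pos, h1, h2]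
      cases ε ⟨k, hk⟩ <;> cases ε ⟨l, hl⟩ <;> simp
    rw [Finset.sum_neg_distrib] at h
    have : ∑ ε, signVec S ε k * signVec S ε l = 0 := by linarith
    rw [this, mul_zero]

/-- `E[bᵀ Cov b] = tr Cov` on the index set `T ⊆ S`. -/
lemma integral_betaLaw_quadForm {N : ℕ} (S T : Finset (Fin N)) (hT : T ⊆ S)
    (Cov : Matrix (Fin N) (Fin N) ℝ) (σ : ℝ) (hdiag : ∀ k ∈ S, Cov k k = σ) :
    ∫ b, ∑ k ∈ T, ∑ l ∈ T, b k * Cov k l * b l ∂(betaLaw S) = T.card * σ := by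
  rw [integral_finsetSum _ fun k _ => integrable_betaLaw S _]
  rw [← nsmul_eq_mul, ← Finset.sum_const]
  refine Finset.sum_congr rfl fun k hk => ?_
  rw [integral_finsetSum _ fun k _ => integrable_betaLaw S _, Finset.sum_eq_single k]
  · have : ∀ b : Fin N → ℝ, b k * Cov k k * b k = Cov k k * (b k * b k) := fun b => by ring
    simp_rw [this]
    rw [integral_const_mul, integral_betaLaw_mul S k k (hT hk) (hT hk), hdiag k (hT hk)]
    simp
  · intro l hl hlk
    have : ∀ b : Fin N → ℝ, b k * Cov k l * b l = Cov k l * (b k * b l) := fun b => by ring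
    simp_rw [this]
    rw [integral_const_mul, integral_betaLaw_mul S k l (hT hk) (hT hl), if_neg (Ne.symm hlk),
      mul_zero]
  · exact fun h => absurd hk h

/-! ### Gaussian moments -/

lemma log_gaussianPDFReal (m x : ℝ) {v : ℝ≥0} (hv : v ≠ 0) :
    Real.log (gaussianPDFReal m v x) =
      -(1 / 2) * Real.log (2 * Real.pi * v) - (x - m) ^ 2 * (1 / (2 * v)) := by
  have hv' : (0 : ℝ) < v := by positivity
  rw [gaussianPDFReal, Real.log_mul (by positivity) (by positivity), Real.log_exp, Real.log_inv,
    Real.log_sqrt (by positivity)]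
  ring

lemma gaussianPDFReal_le (m x : ℝ) (v : ℝ≥0) :
    gaussianPDFReal m v x ≤ (√(2 * Real.pi * v))⁻¹ := by
  rw [gaussianPDFReal]
  refine mul_le_of_le_one_right (by positivity) (Real.exp_le_one_iff.2 ?_)
  rw [neg_div]
  exact neg_nonpos.2 (by positivity)

lemma integral_sq_gaussianReal (v : ℝ≥0) : ∫ x, x ^ 2 ∂(gaussianReal 0 v) = v := by
  have h := variance_eq_sub (memLp_id_gaussianReal' (μ := 0) (v := v) 2 (by simp))
  rw [variance_id_gaussianReal] at h
  simpa using h.symm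

/-- Second moment of `∑ X_k b_k + W`, weighted by a function of `b`. -/
lemma second_moment {N : ℕ} (S T : Finset (Fin N)) (ν : Measure (Fin N → ℝ))
    [IsProbabilityMeasure ν] (Q : (Fin N → ℝ) → ℝ) (hQ0 : ∀ b, 0 ≤ Q b) (v₀ : ℝ≥0)
    (hlaw : ∀ b : Fin N → ℝ, ν.map (fun x => ∑ k ∈ T, b k * x k) =
      gaussianReal 0 (Real.toNNReal (Q b)))
    (hX : ∀ k ∈ T, MemLp (fun x : Fin N → ℝ => x k) 2 ν)
    (c : (Fin N → ℝ) → ℝ) (hc : Measurable c) (M : ℝ) (hcM : ∀ b, |c b| ≤ M) :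
    Integrable (fun p : (Fin N → ℝ) × ((Fin N → ℝ) × ℝ) =>
        (∑ k ∈ T, p.1 k * p.2.1 k + p.2.2) ^ 2 * c p.2.1)
        (ν.prod ((betaLaw S).prod (gaussianReal 0 v₀))) ∧
      ∫ p : (Fin N → ℝ) × ((Fin N → ℝ) × ℝ),
        (∑ k ∈ T, p.1 k * p.2.1 k + p.2.2) ^ 2 * c p.2.1
        ∂(ν.prod ((betaLaw S).prod (gaussianReal 0 v₀))) =
      ∫ b, (Q b + v₀) * c b ∂(betaLaw S) := by
  have := isProbabilityMeasure_betaLaw S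
  have hG2 : MemLp (fun w : ℝ => w) 2 (gaussianReal 0 v₀) :=
    memLp_id_gaussianReal' (μ := 0) (v := v₀) 2 (by simp)
  have hD : MemLp (fun p : (Fin N → ℝ) × ((Fin N → ℝ) × ℝ) =>
      ∑ k ∈ T, p.1 k * p.2.1 k + p.2.2) 2 (ν.prod ((betaLaw S).prod (gaussianReal 0 v₀))) := by
    refine MemLp.add (memLp_finsetSum _ fun k hk => ?_) ((hG2.comp_snd _).comp_snd _)
    refine ((hX k hk).comp_fst _).of_le (by fun_prop) ?_
    have h1 := (Measure.quasiMeasurePreserving_snd (μ := ν)).ae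
      ((Measure.quasiMeasurePreserving_fst (ν := gaussianReal 0 v₀)).ae (ae_betaLaw_abs_le S k))
    filter_upwards [h1] with p hp
    rw [norm_mul]
    exact mul_le_of_le_one_right (norm_nonneg _) hp
  have hint : Integrable (fun p : (Fin N → ℝ) × ((Fin N → ℝ) × ℝ) =>
        (∑ k ∈ T, p.1 k * p.2.1 k + p.2.2) ^ 2 * c p.2.1)
        (ν.prod ((betaLaw S).prod (gaussianReal 0 v₀))) :=
    hD.integrable_sq.mul_bdd (c := M)
      (hc.comp (by fun_prop)).aestronglyMeasurable (ae_of_all _ fun p => hcM p.2.1)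
  refine ⟨hint, ?_⟩
  rw [integral_prod_symm _ hint]
  have hinner : ∀ b : Fin N → ℝ, ∀ w : ℝ, ∫ x : Fin N → ℝ, (∑ k ∈ T, x k * b k + w) ^ 2 * c b ∂ν =
      Q b * c b + c b * w ^ 2 := by
    intro b w
    have h1 : ∫ x : Fin N → ℝ, (∑ k ∈ T, x k * b k + w) ^ 2 ∂ν =
        ∫ s, (s + w) ^ 2 ∂(gaussianReal 0 (Real.toNNReal (Q b))) := by
      rw [← hlaw b, integral_map
        (Finset.measurable_sum _ fun k _ => (measurable_pi_apply k).const_mul _).aemeasurable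
        (by fun_prop)]
      simp_rw [mul_comm]
    have hs : MemLp (fun s : ℝ => s) 2 (gaussianReal 0 (Real.toNNReal (Q b))) :=
      memLp_id_gaussianReal' (μ := 0) (v := Real.toNNReal (Q b)) 2 (by simp)
    have hs1 := hs.integrable (by norm_num)
    have h2 : ∫ s, (s + w) ^ 2 ∂(gaussianReal 0 (Real.toNNReal (Q b))) = Q b + w ^ 2 := by
      have : ∀ s : ℝ, (s + w) ^ 2 = s ^ 2 + (2 * w * s + w ^ 2) := fun s => by ring
      simp_rw [this]
      rw [integral_add (g := fun s => 2 * w * s + w ^ 2) hs.integrable_sq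
        ((hs1.const_mul _).add (integrable_const _)),
        integral_add (hs1.const_mul _) (integrable_const _), integral_const_mul,
        integral_id_gaussianReal, integral_sq_gaussianReal, Real.coe_toNNReal _ (hQ0 b)]
      simp
    rw [integral_mul_const, h1, h2]
    ring
  simp_rw [hinner]
  have hG : ∫ w, w ^ 2 ∂(gaussianReal 0 v₀) = v₀ := integral_sq_gaussianReal v₀
  rw [integral_add ((integrable_betaLaw S fun b => Q b * c b).comp_fst _)
    ((integrable_betaLaw S c).mul_prod hG2.integrable_sq), integral_prod_mul c fun w => w ^ 2, hG,
    integral_fun_fst (fun b => Q b * c b), ← integral_mul_const]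
  simp only [probReal_univ, one_smul]
  rw [← integral_add (integrable_betaLaw S _) (integrable_betaLaw S _)]
  refine integral_congr_ae (ae_of_all _ fun b => ?_)
  ring

/-! ### The bound -/

/-- Per-sample Gaussian mutual information bound: with `X_S` centered jointly Gaussian with
covariance `Σ` (diagonal `N·P_t/K`, off-diagonal `ρ`, positive semidefinite) independent of
`(β_S, W)`, `β_S` i.i.d. `±1` on `S`, `W ∼ N(0, 1/SNR)` and `Y = ∑_{k∈S} X_k β_k + W`, for
any proper subset `S̃ ⊊ S` (with `S' = S ∖ S̃`),
`I(X_{S'} ; Y | X_S̃, β_S) ≤ (1/2)·E[ln(1 + SNR·β_{S'}ᵀ Σ_{S'} β_{S'})]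
  ≤ (1/2)·ln(1 + SNR·(K − |S̃|)·N·P_t/K)`;
in particular the bound does not depend on `ρ`. -/
theorem per_sample_gaussian_mi_bound (N K : ℕ) (hK : 0 < K) (hKN : K ≤ N)
    (S : Finset (Fin N)) (hScard : S.card = K)
    (St : Finset (Fin N)) (hSt : St ⊂ S)
    (SNR Pt : ℝ) (hSNR : 0 < SNR) (hPt : 0 < Pt)
    (ρ : ℝ) (Cov : Matrix (Fin N) (Fin N) ℝ)
    (hdiag : ∀ k ∈ S, Cov k k = N * Pt / K)
    (hoffdiag : ∀ k ∈ S, ∀ l ∈ S, k ≠ l → Cov k l = ρ)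
    (hpsd : ∀ c : Fin N → ℝ, 0 ≤ ∑ k ∈ S, ∑ l ∈ S, c k * Cov k l * c l)
    (ν : Measure (Fin N → ℝ)) (hν : IsProbabilityMeasure ν)
    -- `X_k = 0` almost surely off `S` and `X_S` is centered jointly Gaussian with
    -- covariance `Cov`
    (hoffS : ν {x | ∀ n ∉ S, x n = 0} = 1)
    (hgauss : ∀ c : Fin N → ℝ, ν.map (fun x => ∑ k ∈ S, c k * x k) =
      gaussianReal 0 (Real.toNNReal (∑ k ∈ S, ∑ l ∈ S, c k * Cov k l * c l))) :
    condMutInfo (jointLaw S SNR ν)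
        (fun p => fun n => if n ∈ S \ St then p.1 n else 0)
        (Yout S)
        (fun p => ((fun n => if n ∈ St then p.1 n else 0), p.2.1)) ≤
      (((∫ b, (1 / 2) * Real.log
          (1 + SNR * ∑ k ∈ S \ St, ∑ l ∈ S \ St, b k * Cov k l * b l)
          ∂(betaLaw S) : ℝ)) : EReal) ∧
    (∫ b, (1 / 2) * Real.log
        (1 + SNR * ∑ k ∈ S \ St, ∑ l ∈ S \ St, b k * Cov k l * b l) ∂(betaLaw S)) ≤
      (1 / 2) * Real.log (1 + SNR * (((K : ℝ) - St.card) * ((N : ℝ) * Pt) / K)) := by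

  have hσ : (0 : ℝ) < 1 / SNR := by positivity
  have hT : S \ St ⊆ S := Finset.sdiff_subset
  set T := S \ St with hTdef
  set Q : (Fin N → ℝ) → ℝ := fun b => ∑ k ∈ T, ∑ l ∈ T, b k * Cov k l * b l with hQ
  have hQm : Measurable Q := by
    refine Finset.measurable_sum _ fun k _ => Finset.measurable_sum _ fun l _ => ?_
    exact ((measurable_pi_apply k).mul_const _).mul (measurable_pi_apply l)
  -- restricting the quadratic form and the linear forms to the coordinates in `T`
  have hrestrict : ∀ b : Fin N → ℝ,
      ∑ k ∈ S, ∑ l ∈ S, (if k ∈ T then b k else 0) * Cov k l * (if l ∈ T then b l else 0) =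
        Q b := by
    intro b
    rw [hQ, ← Finset.sum_subset hT]
    · refine Finset.sum_congr rfl fun k hk => ?_
      rw [← Finset.sum_subset hT]
      · exact Finset.sum_congr rfl fun l hl => by simp [hk, hl]
      · intro l _ hl
        simp [hl]
    · intro k _ hk
      simp [hk]
  have hQ0 : ∀ b, 0 ≤ Q b := fun b => hrestrict b ▸ hpsd _
  have hlawT : ∀ b : Fin N → ℝ, ν.map (fun x => ∑ k ∈ T, b k * x k) =
      gaussianReal 0 (Real.toNNReal (Q b)) := by
    intro b
    rw [← hrestrict b, ← hgauss]
    congr 1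
    ext x
    rw [← Finset.sum_subset hT]
    · exact Finset.sum_congr rfl fun k hk => by simp [hk]
    · intro k _ hk
      simp [hk]
  have hX2 : ∀ k ∈ T, MemLp (fun x : Fin N → ℝ => x k) 2 ν := by
    intro k hk
    have h := hlawT (Pi.single k 1)
    have h1 : (fun x : Fin N → ℝ => ∑ l ∈ T, (Pi.single k 1 : Fin N → ℝ) l * x l) =
        fun x => x k := by
      ext x
      rw [Finset.sum_eq_single k]
      · simp
      · intro l _ hl
        simp [hl]
      · exact fun h => absurd hk h
    rw [h1] at h
    have h2 := memLp_id_gaussianReal' (μ := 0) (v := Real.toNNReal (Q (Pi.single k 1))) 2 (by simp)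
    rw [← h] at h2
    exact (memLp_map_measure_iff aestronglyMeasurable_id
      (measurable_pi_apply k).aemeasurable).1 h2
  have hβ := isProbabilityMeasure_betaLaw S
  set v₀ : ℝ≥0 := Real.toNNReal (1 / SNR) with hv₀
  have hv₀c : (v₀ : ℝ) = 1 / SNR := Real.coe_toNNReal _ hσ.le
  have hv₀0 : v₀ ≠ 0 := (Real.toNNReal_pos.2 hσ).ne'
  have hjl : jointLaw S SNR ν = ν.prod ((betaLaw S).prod (gaussianReal 0 v₀)) := rfl
  constructor
  · set V : (Fin N → ℝ) → ℝ≥0 := fun b => Real.toNNReal (Q b + 1 / SNR) with hV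
    have hVc : ∀ b, (V b : ℝ) = Q b + v₀ := fun b => by
      rw [hV, hv₀c]
      exact Real.coe_toNNReal _ (add_nonneg (hQ0 b) hσ.le)
    have hV0 : ∀ b, V b ≠ 0 := fun b =>
      (Real.toNNReal_pos.2 (add_pos_of_nonneg_of_pos (hQ0 b) hσ)).ne'
    have hVm : Measurable V := (hQm.add_const _).real_toNNReal
    set m : (Fin N → ℝ) × (Fin N → ℝ) → ℝ := fun z => ∑ k ∈ St, z.1 k * z.2 k with hm
    have hmm : Measurable m := by fun_prop
    have hprob : IsProbabilityMeasure (jointLaw S SNR ν) := by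
      unfold jointLaw
      infer_instance
    have hXm : Measurable fun x : Fin N → ℝ => fun n => if n ∈ T then x n else 0 :=
      measurable_pi_lambda _ fun n => by
        split_ifs
        · exact measurable_pi_apply n
        · exact measurable_const
    have hZm : Measurable fun x : Fin N → ℝ => fun n => if n ∈ St then x n else 0 :=
      measurable_pi_lambda _ fun n => by
        split_ifs
        · exact measurable_pi_apply n
        · exact measurable_const
    have hsplit : ∀ x b : Fin N → ℝ,
        ∑ k ∈ S, x k * b k = ∑ k ∈ T, x k * b k + ∑ k ∈ St, x k * b k := fun x b =>
      (Finset.sum_sdiff hSt.1).symm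
    have hstX : ∀ x b : Fin N → ℝ,
        ∑ k ∈ T, (if k ∈ T then x k else 0) * b k = ∑ k ∈ T, x k * b k := fun x b =>
      Finset.sum_congr rfl fun k hk => by simp [hk]
    have hstZ : ∀ x b : Fin N → ℝ,
        ∑ k ∈ St, (if k ∈ St then x k else 0) * b k = ∑ k ∈ St, x k * b k := fun x b =>
      Finset.sum_congr rfl fun k hk => by simp [hk]
    have hlogW : ∀ w, Real.log (gaussianPDFReal 0 v₀ w) =
        -(1 / 2) * Real.log (2 * Real.pi * v₀) - w ^ 2 * (1 / (2 * v₀)) := fun w => by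
      rw [log_gaussianPDFReal 0 w hv₀0, sub_zero]
    -- the centered output `Y - E[Y | X_St, β]` is the sum over `T` plus the noise
    have hlogR : ∀ p : (Fin N → ℝ) × ((Fin N → ℝ) × ℝ), Real.log (gaussianPDFReal
        (m ((fun n => if n ∈ St then p.1 n else 0), p.2.1)) (V p.2.1) (Yout S p)) =
        -(1 / 2) * Real.log (2 * Real.pi * V p.2.1) -
          (∑ k ∈ T, p.1 k * p.2.1 k + p.2.2) ^ 2 * (1 / (2 * V p.2.1)) := fun p => by
      rw [log_gaussianPDFReal _ _ (hV0 _), Yout, hm]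
      simp only [hstZ, hsplit]
      ring_nf
    have hcm : Measurable fun b => 1 / (2 * (V b : ℝ)) := by fun_prop
    have hcM : ∀ b, |1 / (2 * (V b : ℝ))| ≤ 1 / (2 * v₀) := fun b => by
      have : (0 : ℝ) < v₀ := by positivity
      rw [abs_of_nonneg (by positivity), hVc]
      exact one_div_le_one_div_of_le (by positivity) (by linarith [hQ0 b])
    obtain ⟨hDi, hDe⟩ := second_moment S T ν Q hQ0 v₀ hlawT hX2 _ hcm _ hcM
    have hG2 : Integrable (fun w : ℝ => w ^ 2) (gaussianReal 0 v₀) :=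
      (memLp_id_gaussianReal' (μ := 0) (v := v₀) 2 (by simp)).integrable_sq
    have hWi : Integrable (fun p : (Fin N → ℝ) × ((Fin N → ℝ) × ℝ) => p.2.2 ^ 2 * (1 / (2 * v₀)))
        (jointLaw S SNR ν) := ((hG2.comp_snd _).comp_snd _).mul_const _
    have hWe : ∫ p, p.2.2 ^ 2 * (1 / (2 * v₀)) ∂(jointLaw S SNR ν) = 1 / 2 := by
      rw [integral_mul_const, hjl,
        integral_fun_snd (fun t : (Fin N → ℝ) × ℝ => t.2 ^ 2),
        integral_fun_snd (fun w : ℝ => w ^ 2), integral_sq_gaussianReal]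
      have : (v₀ : ℝ) ≠ 0 := by positivity
      simp only [probReal_univ, one_smul]
      field_simp
    have hLi : Integrable (fun p : (Fin N → ℝ) × ((Fin N → ℝ) × ℝ) =>
        -(1 / 2) * Real.log (2 * Real.pi * V p.2.1)) (jointLaw S SNR ν) :=
      ((integrable_betaLaw S fun b =>
        -(1 / 2) * Real.log (2 * Real.pi * V b)).comp_fst _).comp_snd _
    have hLe : ∫ p, -(1 / 2) * Real.log (2 * Real.pi * V p.2.1) ∂(jointLaw S SNR ν) =
        ∫ b, -(1 / 2) * Real.log (2 * Real.pi * V b) ∂(betaLaw S) := by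
      rw [hjl, integral_fun_snd (fun t : (Fin N → ℝ) × ℝ =>
          -(1 / 2) * Real.log (2 * Real.pi * V t.1)),
        integral_fun_fst (fun b => -(1 / 2) * Real.log (2 * Real.pi * V b))]
      simp only [probReal_univ, one_smul]
    have hDe' : ∫ b, (Q b + v₀) * (1 / (2 * (V b : ℝ))) ∂(betaLaw S) = 1 / 2 := by
      have : ∀ b, (Q b + v₀) * (1 / (2 * (V b : ℝ))) = 1 / 2 := fun b => by
        have : (V b : ℝ) ≠ 0 := by simpa using hV0 b
        rw [← hVc]
        field_simp
      rw [integral_congr_ae (ae_of_all _ this), integral_const]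
      simp only [probReal_univ, one_smul]
    have hGd : gaussianReal 0 v₀ =
        volume.withDensity fun w => ENNReal.ofReal (gaussianPDFReal 0 v₀ w) :=
      gaussianReal_of_var_ne_zero 0 hv₀0
    have hlaw := map_pair_noise ν (betaLaw S) (gaussianReal 0 v₀)
      (fun t : (Fin N → ℝ) × (Fin N → ℝ) => ((fun n => if n ∈ T then t.1 n else 0 : Fin N → ℝ),
        ((fun n => if n ∈ St then t.1 n else 0 : Fin N → ℝ), t.2)))
      ((hXm.comp measurable_fst).prodMk ((hZm.comp measurable_fst).prodMk measurable_snd))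
    rw [← hjl] at hlaw
    rw [hGd] at hlaw
    have hr1 : ∀ z : (Fin N → ℝ) × (Fin N → ℝ),
        ∫⁻ y, ENNReal.ofReal (gaussianPDFReal (m z) (V z.2) y) ≤ 1 := fun z =>
      (lintegral_gaussianPDFReal_eq_one (m z) (hV0 z.2)).le
    have key := condMutInfo_le_of_channel (jointLaw S SNR ν)
      (fun p => fun n => if n ∈ T then p.1 n else 0) (Yout S)
      (fun p => ((fun n => if n ∈ St then p.1 n else 0), p.2.1)) (fun p => p.2.2)
      (hXm.comp measurable_fst)
      ((hZm.comp measurable_fst).prodMk (measurable_fst.comp measurable_snd))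
      (by fun_prop)
      (fun xz => ∑ k ∈ T, xz.1 k * xz.2.2 k + m xz.2) (by fun_prop)
      (fun p => by simp only [Yout, hm, hstX, hstZ, hsplit])
      (gaussianPDFReal 0 v₀) (measurable_gaussianPDFReal 0 v₀)
      (fun w => gaussianPDFReal_pos 0 v₀ w hv₀0) (Real.toNNReal (√(2 * Real.pi * v₀))⁻¹)
      (fun w => by
        rw [Real.coe_toNNReal _ (by positivity)]
        exact gaussianPDFReal_le 0 w v₀)
      hlaw
      (fun t => gaussianPDFReal (m t.2) (V t.2.2) t.1)
      (measurable_uncurry_gaussianPDFReal.comp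
        ((hmm.comp measurable_snd).prodMk ((hVm.comp (by fun_prop)).prodMk measurable_fst)))
      (fun t => gaussianPDFReal_pos (m t.2) (V t.2.2) t.1 (hV0 t.2.2))
      hr1
      (by
        simp only [hlogW]
        exact (integrable_const _).sub hWi)
      (by
        simp only [hlogR]
        exact hLi.sub hDi)
    refine key.trans (EReal.coe_le_coe_iff.2 (le_of_eq ?_))
    simp only [hlogW, hlogR]
    rw [integral_sub (integrable_const _) hWi, integral_sub hLi hDi, hWe, hLe,
      show ∫ p, (∑ k ∈ T, p.1 k * p.2.1 k + p.2.2) ^ 2 * (1 / (2 * (V p.2.1 : ℝ)))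
        ∂(jointLaw S SNR ν) = 1 / 2 from hDe.trans hDe']
    have hcst : ∫ _p, -(1 / 2) * Real.log (2 * Real.pi * v₀) ∂(jointLaw S SNR ν) =
        ∫ _b, -(1 / 2) * Real.log (2 * Real.pi * v₀) ∂(betaLaw S) := by simp
    rw [hcst, sub_sub_sub_cancel_right,
      ← integral_sub (integrable_betaLaw S _) (integrable_betaLaw S _)]
    refine integral_congr_ae (ae_of_all _ fun b => ?_)
    have h1 : (0 : ℝ) < v₀ := by positivity
    have h2 : (0 : ℝ) < 1 + SNR * Q b := by
      have := mul_nonneg hSNR.le (hQ0 b)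
      positivity
    have h3 : (2 * Real.pi * V b : ℝ) = (2 * Real.pi * v₀) * (1 + SNR * Q b) := by
      rw [hVc, hv₀c]
      field_simp
      ring
    change -(1 / 2) * Real.log (2 * Real.pi * v₀) - -(1 / 2) * Real.log (2 * Real.pi * V b) =
      1 / 2 * Real.log (1 + SNR * Q b)
    rw [h3, Real.log_mul (by positivity) h2.ne']
    ring
  · have hcard : (T.card : ℝ) = K - St.card := by
      rw [hTdef, Finset.card_sdiff_of_subset hSt.1, hScard,
        Nat.cast_sub (hScard ▸ Finset.card_le_card hSt.1)]
    have hEQ : ∫ b, Q b ∂(betaLaw S) = ((K : ℝ) - St.card) * ((N : ℝ) * Pt) / K := by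
      rw [hQ, integral_betaLaw_quadForm S T hT Cov _ hdiag, hcard]
      ring
    set E := ((K : ℝ) - St.card) * ((N : ℝ) * Pt) / K with hE
    have hE0 : 0 ≤ E := hEQ ▸ integral_nonneg hQ0
    have ht : 0 < 1 + SNR * E := by positivity
    -- Jensen's inequality through the tangent line of `log` at the mean
    have hle : ∀ b, 1 / 2 * Real.log (1 + SNR * Q b) ≤
        1 / 2 * Real.log (1 + SNR * E) + SNR / (2 * (1 + SNR * E)) * (Q b - E) := fun b => by
      have h2 : (0 : ℝ) < 1 + SNR * Q b := by
        have := mul_nonneg hSNR.le (hQ0 b)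
        positivity
      have h := Real.log_le_sub_one_of_pos (div_pos h2 ht)
      rw [Real.log_div h2.ne' ht.ne'] at h
      have h3 : SNR / (2 * (1 + SNR * E)) * (Q b - E) =
          1 / 2 * ((1 + SNR * Q b) / (1 + SNR * E) - 1) := by
        field_simp
        ring
      rw [h3]
      linarith
    refine (integral_mono (integrable_betaLaw S _) (integrable_betaLaw S _) hle).trans ?_
    rw [integral_add (integrable_betaLaw S _) (integrable_betaLaw S _), integral_const,
      integral_const_mul,
      integral_sub (integrable_betaLaw S _) (integrable_betaLaw S _), hEQ]
    simp
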